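/- arXiv:0812.3359 — 6 statements merged into one kernel-verified Lean document; each statement's English description precedes it below -/
import Mathlib

section
/- Let f be an M-map with f(∅) ≠ 0, and define the M-map f^{-1*} by f^{-1*}(∅) = 1/f(∅) and, for nonempty a ⊆ Ω, f^{-1*}(a) = Σ_{p} |p|!·(−1)^{|p|}·(∏_{c ∈ p} f(c)) / f(∅)^{|p|+1}, where the sum runs over all set partitions p of a and |p| denotes the number of blocks of p. Then f * f^{-1*} = 1*, i.e. (f * f^{-1*})(∅) = 1 and (f * f^{-1*})(a) = 0 for every nonempty a ⊆ Ω. -/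
open Finset

/-- The convolution product of M-maps: `(f * g)(a) = ∑_{b ⊆ a} f(b) · g(a \ b)`. -/
noncomputable def MMap.conv {Ω : Type*} [DecidableEq Ω] (f g : Finset Ω → ℂ) : Finset Ω → ℂ :=
  fun a => ∑ b ∈ a.powerset, f b * g (a \ b)

/-- The M-map `1*`, with `1*(∅) = 1` and `1*(a) = 0` otherwise. -/
noncomputable def MMap.oneStar {Ω : Type*} [DecidableEq Ω] : Finset Ω → ℂ :=
  fun a => if a = ∅ then 1 else 0

/-- The explicit convolution inverse `f^{-1*}`: `f^{-1*}(∅) = 1/f(∅)` and, for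
nonempty `a`, `f^{-1*}(a) = ∑_p |p|!·(−1)^{|p|}·(∏_{c ∈ p} f(c))/f(∅)^{|p|+1}`,
summed over all set partitions `p` of `a`. -/
noncomputable def MMap.invStar {Ω : Type*} [DecidableEq Ω] (f : Finset Ω → ℂ) :
    Finset Ω → ℂ := fun a =>
  if a = ∅ then 1 / f ∅ else
    ∑ p : Finpartition a,
      (Nat.factorial p.parts.card : ℂ) * (-1 : ℂ) ^ p.parts.card * (∏ c ∈ p.parts, f c) /
        (f ∅) ^ (p.parts.card + 1)

/-!
Deleting a block `b` from a partition of `a` is a bijection between the partitions of `a` that have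
`b` as a block and all partitions of `a \ b`. The terms `b ≠ ∅` of the convolution therefore
become a sum over pairs of a partition `p` of `a` and a block `b` of `p`. The factor `f(b)`
completes the product over the other blocks to `∏_{c ∈ p} f(c)`, so the `|p|` blocks of `p`
all contribute the same amount; as `|p| · (|p| - 1)! = |p|!` and the signs are opposite, together
they cancel the contribution of `p` to the term `b = ∅`.
-/

namespace MMap

section RemoveBlock

variable {α : Type*} [GeneralizedBooleanAlgebra α] {a b : α}

theorem notMem_parts_of_sdiff (hb : b ≠ ⊥) (q : Finpartition (a \ b)) : b ∉ q.parts :=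
  fun hbq => hb (disjoint_sdiff_self_left.symm.eq_bot_of_le (q.le hbq))

variable [DecidableEq α]

theorem parts_avoid_of_mem (p : Finpartition a) (hb : b ∈ p.parts) :
    (p.avoid b).parts = p.parts.erase b := by
  have sdiff_eq_self {d : α} (hd : d ∈ p.parts) (hdb : d ≠ b) : d \ b = d :=
    (p.disjoint hd hb hdb).sdiff_eq_left
  ext c
  rw [Finpartition.mem_avoid, mem_erase]
  constructor
  · rintro ⟨d, hd, hdb, rfl⟩
    have hne : d ≠ b := fun h => hdb h.le
    rw [sdiff_eq_self hd hne]
    exact ⟨hne, hd⟩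
  · rintro ⟨hcb, hc⟩
    exact ⟨c, hc, fun hle => p.ne_bot hc ((p.disjoint hc hb hcb).eq_bot_of_le hle),
      sdiff_eq_self hc hcb⟩

/-- Removing the block `b` identifies the partitions of `a` having `b` as a block with the
partitions of `a \ b`; the inverse adds `b` as a new block. -/
def removeBlockEquiv (hb : b ≠ ⊥) (hba : b ≤ a) :
    {p : Finpartition a // b ∈ p.parts} ≃ Finpartition (a \ b) where
  toFun p := p.1.avoid b
  invFun q := ⟨q.extend hb disjoint_sdiff_self_left (sdiff_sup_cancel hba), mem_insert_self _ _⟩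
  left_inv p := by
    refine Subtype.ext (Finpartition.ext ?_)
    simp [parts_avoid_of_mem p.1 p.2, insert_erase p.2]
  right_inv q := by
    ext1
    rw [parts_avoid_of_mem _ (mem_insert_self _ _)]
    exact erase_insert (notMem_parts_of_sdiff hb q)

theorem parts_removeBlockEquiv (hb : b ≠ ⊥) (hba : b ≤ a)
    (p : {p : Finpartition a // b ∈ p.parts}) :
    (removeBlockEquiv hb hba p).parts = p.1.parts.erase b :=
  parts_avoid_of_mem p.1 p.2

end RemoveBlock

section DoubleCounting

variable {Ω M : Type*} [DecidableEq Ω] [AddCommMonoid M]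

theorem sum_finpartition_sdiff {a b : Finset Ω} (hb : b ≠ ∅) (hba : b ⊆ a)
    (F : Finset (Finset Ω) → M) :
    ∑ q : Finpartition (a \ b), F q.parts =
      ∑ p : Finpartition a with b ∈ p.parts, F (p.parts.erase b) := by
  rw [← (removeBlockEquiv hb hba).sum_comp]
  simp only [parts_removeBlockEquiv]
  exact (sum_subtype _ (by simp) fun p : Finpartition a => F (p.parts.erase b)).symm

theorem sum_sum_finpartition_sdiff (a : Finset Ω) (F : Finset Ω → Finset (Finset Ω) → M) :
    ∑ b ∈ a.powerset.erase ∅, ∑ q : Finpartition (a \ b), F b q.parts =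
      ∑ p : Finpartition a, ∑ b ∈ p.parts, F b (p.parts.erase b) := by
  calc
    _ = ∑ b ∈ a.powerset.erase ∅,
          ∑ p : Finpartition a with b ∈ p.parts, F b (p.parts.erase b) := by
      refine sum_congr rfl fun b hb => ?_
      rw [mem_erase, mem_powerset] at hb
      exact sum_finpartition_sdiff hb.1 hb.2 (F b)
    _ = _ := by
      refine sum_comm' fun b p => ?_
      simp only [mem_erase, mem_powerset, mem_filter_univ, mem_univ, and_true]
      exact ⟨fun h => h.2, fun h => ⟨⟨p.ne_empty h, p.subset h⟩, h⟩⟩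

end DoubleCounting

section PartitionInverse

variable {ι Ω R : Type*} [CommRing R]

/-- The contribution `|P|! (-1)^|P| (∏_{c ∈ P} f(c)) u^(|P|+1)` of a partition with set of blocks
`P` to the convolution inverse of `f`. The parameter `u` stands for the inverse of `f(∅)`, so that
no division is needed. -/
def blockWeight (f : ι → R) (u : R) (P : Finset ι) : R :=
  (Nat.factorial #P : R) * (-1) ^ #P * (∏ c ∈ P, f c) * u ^ (#P + 1)

theorem mul_blockWeight_erase [DecidableEq ι] (f : ι → R) (u : R) {P : Finset ι} {b : ι}
    (hb : b ∈ P) :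
    f b * blockWeight f u (P.erase b) =
      (Nat.factorial (#P - 1) : R) * (-1) ^ (#P - 1) * (∏ c ∈ P, f c) * u ^ #P := by
  rw [blockWeight, card_erase_add_one hb, card_erase_of_mem hb, ← mul_prod_erase P f hb]
  ring

theorem mul_blockWeight_add_sum_erase [DecidableEq ι] (f : ι → R) {z u : R} (hzu : z * u = 1)
    {P : Finset ι} (hP : P.Nonempty) :
    z * blockWeight f u P + ∑ b ∈ P, f b * blockWeight f u (P.erase b) = 0 := by
  rw [sum_congr rfl fun b hb => mul_blockWeight_erase f u hb, sum_const, nsmul_eq_mul, blockWeight]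
  obtain ⟨n, hn⟩ : ∃ n, #P = n + 1 := Nat.exists_eq_succ_of_ne_zero hP.card_ne_zero
  rw [hn, Nat.add_sub_cancel, Nat.factorial_succ]
  push_cast
  linear_combination
    -((n + 1) * (Nat.factorial n : R) * (-1) ^ n * (∏ c ∈ P, f c) * u ^ (n + 1)) * hzu

variable [DecidableEq Ω]

/-- The partition formula for the convolution inverse of `f` over a commutative ring, where `u`
stands for the inverse of `f(∅)`. The value at `∅` is `u`, coming from the empty partition. -/
def partitionInverse (f : Finset Ω → R) (u : R) (a : Finset Ω) : R :=
  ∑ p : Finpartition a, blockWeight f u p.parts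

theorem partitionInverse_empty (f : Finset Ω → R) (u : R) : partitionInverse f u ∅ = u := by
  have : Unique (Finpartition (∅ : Finset Ω)) :=
    inferInstanceAs (Unique (Finpartition (⊥ : Finset Ω)))
  have parts_eq_empty (p : Finpartition (∅ : Finset Ω)) : p.parts = ∅ :=
    p.parts_eq_empty_iff.2 rfl
  simp [partitionInverse, blockWeight, parts_eq_empty]

theorem invStar_eq_partitionInverse (f : Finset Ω → ℂ) :
    invStar f = partitionInverse f (f ∅)⁻¹ := by
  funext a
  by_cases ha : a = ∅
  · simp [invStar, ha, partitionInverse_empty]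
  · simp only [invStar, if_neg ha, partitionInverse, blockWeight, div_eq_mul_inv, inv_pow]

end PartitionInverse

end MMap

theorem mmap_conv_invStar_general {Ω R : Type*} [DecidableEq Ω] [CommRing R]
    (f : Finset Ω → R) {u : R} (hu : f ∅ * u = 1) (a : Finset Ω) :
    ∑ b ∈ a.powerset, f b * MMap.partitionInverse f u (a \ b) = if a = ∅ then 1 else 0 := by
  split_ifs with ha
  · simp [ha, MMap.partitionInverse_empty, hu]
  rw [← add_sum_erase _ _ (empty_mem_powerset a), sdiff_empty]
  simp only [MMap.partitionInverse, mul_sum]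
  rw [MMap.sum_sum_finpartition_sdiff a fun b P => f b * MMap.blockWeight f u P,
    ← sum_add_distrib]
  exact sum_eq_zero fun p _ => MMap.mul_blockWeight_add_sum_erase f hu (p.parts_nonempty ha)

/-- If `f(∅) ≠ 0`, then the explicit partition formula `f^{-1*}` is a convolution
inverse of `f`: `f * f^{-1*} = 1*`. -/
theorem mmap_conv_invStar {Ω : Type*} [DecidableEq Ω] [Fintype Ω]
    (f : Finset Ω → ℂ) (hf : f ∅ ≠ 0) :
    MMap.conv f (MMap.invStar f) = MMap.oneStar := by
  rw [MMap.invStar_eq_partitionInverse]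
  exact funext (mmap_conv_invStar_general f (mul_inv_cancel₀ hf))
end

section
/- Let g be any M-map. Then for every nonempty subset a ⊆ Ω, the cumulant of the anticumulant recovers g: log*(exp* g)(a) = g(a). -/
open Finset

/-- The cumulant `log* f` on nonempty subsets:
`log* f(a) = ∑_p (|p|−1)!·(−1)^{|p|−1}·(∏_{c ∈ p} f(c))/f(∅)^{|p|}`,
summed over all set partitions `p` of `a`, `|p|` being the number of blocks. -/
noncomputable def MMap.logStar {Ω : Type*} [DecidableEq Ω] (f : Finset Ω → ℂ) :
    Finset Ω → ℂ := fun a =>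
  ∑ p : Finpartition a,
    (Nat.factorial (p.parts.card - 1) : ℂ) * (-1 : ℂ) ^ (p.parts.card - 1) *
      (∏ c ∈ p.parts, f c) / (f ∅) ^ p.parts.card

/-- The anticumulant `exp* g`: `exp* g(∅) = e^{g(∅)}` and, for nonempty `a`,
`exp* g(a) = e^{g(∅)} · ∑_p ∏_{c ∈ p} g(c)`, summed over set partitions `p` of `a`. -/
noncomputable def MMap.expStar {Ω : Type*} [DecidableEq Ω] (g : Finset Ω → ℂ) :
    Finset Ω → ℂ := fun a =>
  if a = ∅ then Complex.exp (g ∅)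
  else Complex.exp (g ∅) * ∑ p : Finpartition a, ∏ c ∈ p.parts, g c

/-!
M-maps form a commutative ring under convolution. In it, a sum over set partitions weighted by the
number of blocks is the composition with a power series, and restricting an M-map to the sets that
contain a fixed point `x` is a derivation `D`. The chain rule gives `D (log f) = D f * f⁻¹` and
`D (exp g) = D g * exp g`, hence `D (log (exp g)) = D g * exp g * (exp g)⁻¹ = D g`. This determines
`log (exp g)` on every set containing `x`.
-/

namespace MMap

section Finpartition

variable {α : Type*} [GeneralizedBooleanAlgebra α] [DecidableEq α]

theorem parts_avoid_of_mem_parts {a b : α} (p : Finpartition a) (hb : b ∈ p.parts) :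
    (p.avoid b).parts = p.parts.erase b := by
  have disjoint_b {d : α} (hd : d ∈ p.parts) (hdb : d ≠ b) : Disjoint d b :=
    p.disjoint hd hb hdb
  ext c
  rw [Finpartition.mem_avoid, mem_erase]
  constructor
  · rintro ⟨d, hd, hdb, rfl⟩
    have hne : d ≠ b := fun h => hdb h.le
    rw [(disjoint_b hd hne).sdiff_eq_left]
    exact ⟨hne, hd⟩
  · rintro ⟨hne, hc⟩
    exact ⟨c, hc, fun hcb => p.ne_bot hc ((disjoint_b hc hne).eq_bot_of_le hcb),
      (disjoint_b hc hne).sdiff_eq_left⟩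

theorem exists_mem_parts_avoid_eq {a b : α} (hba : b ≤ a) (hb : b ≠ ⊥)
    (q : Finpartition (a \ b)) : ∃ p : Finpartition a, b ∈ p.parts ∧ p.avoid b = q := by
  have hbq : b ∉ q.parts := fun h =>
    hb (disjoint_self.1 (disjoint_sdiff_self_left.mono_left (q.le h)))
  let p := q.extend hb disjoint_sdiff_self_left (sdiff_sup_cancel hba)
  have hbp : b ∈ p.parts := mem_insert_self b q.parts
  refine ⟨p, hbp, Finpartition.ext ?_⟩
  rw [parts_avoid_of_mem_parts p hbp]
  exact erase_insert hbq

variable {Ω : Type*} [DecidableEq Ω]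

theorem sum_sum_parts_avoid {M : Type*} [AddCommMonoid M] (a : Finset Ω)
    (G : (b : Finset Ω) → Finpartition (a \ b) → M) :
    ∑ p : Finpartition a, ∑ b ∈ p.parts, G b (p.avoid b) =
      ∑ b ∈ a.powerset.erase ∅, ∑ q : Finpartition (a \ b), G b q := by
  rw [sum_sigma', sum_sigma']
  refine sum_bij (fun s _ => ⟨s.2, s.1.avoid s.2⟩) ?_ ?_ ?_ fun _ _ => rfl
  · rintro ⟨p, b⟩ hs
    have hb : b ∈ p.parts := (mem_sigma.1 hs).2
    exact mem_sigma.2 ⟨mem_erase.2 ⟨p.ne_empty hb, mem_powerset.2 (p.subset hb)⟩, mem_univ _⟩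
  · rintro ⟨p, b⟩ hs ⟨p', b'⟩ hs' h
    have hb : b ∈ p.parts := (mem_sigma.1 hs).2
    have hb' : b' ∈ p'.parts := (mem_sigma.1 hs').2
    obtain ⟨rfl, havoid⟩ := Sigma.mk.inj h
    have herase : p.parts.erase b = p'.parts.erase b := by
      rw [← parts_avoid_of_mem_parts p hb, ← parts_avoid_of_mem_parts p' hb', eq_of_heq havoid]
    obtain rfl : p = p' :=
      Finpartition.ext (by rw [← insert_erase hb, herase, insert_erase hb'])
    rfl
  · rintro ⟨b, q⟩ hs
    obtain ⟨hb, hba⟩ := mem_erase.1 (mem_sigma.1 hs).1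
    obtain ⟨p, hbp, hq⟩ := exists_mem_parts_avoid_eq (mem_powerset.1 hba) hb q
    exact ⟨⟨p, b⟩, mem_sigma.2 ⟨mem_univ p, hbp⟩, congrArg (Sigma.mk b) hq⟩

theorem sum_parts_ite_mem {R : Type*} [AddCommMonoidWithOne R] {a : Finset Ω} (p : Finpartition a)
    (x : Ω) : ∑ b ∈ p.parts, (if x ∈ b then 1 else 0 : R) = if x ∈ a then 1 else 0 := by
  split_ifs with hx
  · rw [sum_eq_single_of_mem (p.part x) (p.part_mem.2 hx)
      fun b hb hne => if_neg fun hxb => hne (p.part_eq_of_mem hb hxb).symm,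
      if_pos (p.mem_part hx)]
  · exact sum_eq_zero fun b hb => if_neg fun hxb => hx (p.subset hb hxb)

end Finpartition

variable {Ω : Type*} [DecidableEq Ω]

section Convolution

theorem conv_eq_add_sum_erase_empty (f h : Finset Ω → ℂ) (a : Finset Ω) :
    conv f h a = f ∅ * h a + ∑ b ∈ a.powerset.erase ∅, f b * h (a \ b) := by
  rw [conv, ← add_sum_erase _ _ (empty_mem_powerset a), sdiff_empty]

theorem conv_single_empty_one (f : Finset Ω → ℂ) : conv f (Pi.single ∅ 1) = f := by
  funext a
  rw [conv, sum_eq_single_of_mem a (mem_powerset_self a)]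
  · simp
  · intro b hb hne
    have hab : a \ b ≠ ∅ := fun h =>
      hne ((mem_powerset.1 hb).antisymm (sdiff_eq_empty_iff_subset.1 h))
    rw [Pi.single_eq_of_ne hab, mul_zero]

theorem conv_assoc (f g h : Finset Ω → ℂ) : conv (conv f g) h = conv f (conv g h) := by
  funext a
  simp only [conv, sum_mul, mul_sum]
  rw [sum_sigma', sum_sigma']
  refine sum_bij' (fun s _ => ⟨s.2, s.1 \ s.2⟩) (fun s _ => ⟨s.1 ∪ s.2, s.1⟩) ?_ ?_ ?_ ?_ ?_
  all_goals
    rintro ⟨b, c⟩ hs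
    simp only [mem_sigma, mem_powerset] at hs
  · simp only [mem_sigma, mem_powerset]
    exact ⟨hs.2.trans hs.1, sdiff_subset_sdiff hs.1 subset_rfl⟩
  · simp only [mem_sigma, mem_powerset]
    exact ⟨union_subset hs.1 (hs.2.trans sdiff_subset), subset_union_left⟩
  · simp only [union_sdiff_of_subset hs.2]
  · simp only [union_sdiff_cancel_left (disjoint_sdiff.mono_right hs.2)]
  · have sdiff_eq : (a \ c) \ (b \ c) = a \ b := by
      rw [sdiff_sdiff_left, sup_eq_union, union_sdiff_of_subset hs.2]
    rw [sdiff_eq, mul_assoc]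

end Convolution

section PartitionSum

variable {R : Type*}

/-- The composition `W ∘ f` in the convolution ring of M-maps, where `W` is the exponential
generating series `∑ n, w n * t ^ n / n!`. The blocks of a partition are nonempty, so the series is
really composed with `f` after its constant term `f ∅` has been replaced by `0`. -/
def partitionSum [CommSemiring R] (w : ℕ → R) (f : Finset Ω → R) (a : Finset Ω) : R :=
  ∑ p : Finpartition a, w #p.parts * ∏ c ∈ p.parts, f c

/-- The restriction of an M-map to the sets containing `x`: the derivation `x ∂/∂x` of the
convolution ring, if `f` is read as the polynomial `∑ a, f a * ∏ y ∈ a, y` modulo squares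
`y ^ 2`. -/
def pointed [Zero R] (x : Ω) (f : Finset Ω → R) (a : Finset Ω) : R :=
  if x ∈ a then f a else 0

/-- The coefficients of `1 / (1 + t) = ∑ n, reciprocalCoeff n * t ^ n / n!`, the weights for which
`partitionSum` inverts an M-map with value `1` at `∅`. -/
def reciprocalCoeff [Ring R] (n : ℕ) : R :=
  n.factorial * (-1) ^ n

theorem partitionSum_empty [CommSemiring R] (w : ℕ → R) (f : Finset Ω → R) :
    partitionSum w f ∅ = w 0 := by
  have parts_eq (p : Finpartition (∅ : Finset Ω)) : p.parts = ∅ := p.parts_eq_empty_iff.2 rfl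
  have : Unique (Finpartition (∅ : Finset Ω)) := inferInstanceAs (Unique (Finpartition ⊥))
  simp [partitionSum, parts_eq]

theorem sum_mul_partitionSum_sdiff [CommSemiring R] (φ : Finset Ω → R) (w : ℕ → R)
    (f : Finset Ω → R) (a : Finset Ω) :
    ∑ b ∈ a.powerset.erase ∅, φ b * f b * partitionSum w f (a \ b) =
      ∑ p : Finpartition a, (∑ b ∈ p.parts, φ b) * (w (#p.parts - 1) * ∏ c ∈ p.parts, f c) := by
  simp only [partitionSum, mul_sum]
  rw [← sum_sum_parts_avoid a fun b q => φ b * f b * (w #q.parts * ∏ c ∈ q.parts, f c)]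
  refine sum_congr rfl fun p _ => ?_
  rw [sum_mul]
  refine sum_congr rfl fun b hb => ?_
  rw [parts_avoid_of_mem_parts p hb, card_erase_of_mem hb, ← mul_prod_erase p.parts f hb]
  ring

theorem pointed_partitionSum (x : Ω) (w : ℕ → ℂ) (f : Finset Ω → ℂ) :
    pointed x (partitionSum w f) =
      conv (pointed x f) (partitionSum (fun n => w (n + 1)) f) := by
  funext a
  have pointed_eq (b : Finset Ω) : pointed x f b = (if x ∈ b then 1 else 0) * f b := by
    simp [pointed]
  rw [conv_eq_add_sum_erase_empty]
  simp only [pointed_eq, notMem_empty, if_false, zero_mul, zero_add, sum_mul_partitionSum_sdiff,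
    sum_parts_ite_mem]
  by_cases hx : x ∈ a
  · simp only [pointed, partitionSum, hx, if_true, one_mul]
    refine sum_congr rfl fun p _ => ?_
    have hcard : 0 < #p.parts := card_pos.2 ⟨p.part x, p.part_mem.2 hx⟩
    rw [Nat.sub_add_cancel hcard]
  · simp [pointed, hx]

theorem reciprocalCoeff_succ [Ring R] (n : ℕ) :
    (reciprocalCoeff (n + 1) : R) = -((n + 1 : ℕ) * reciprocalCoeff n) := by
  simp only [reciprocalCoeff, Nat.factorial_succ, Nat.cast_mul, pow_succ, mul_neg, mul_one,
    mul_assoc]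

theorem conv_partitionSum_reciprocalCoeff (f : Finset Ω → ℂ) (hf : f ∅ = 1) :
    conv f (partitionSum reciprocalCoeff f) = Pi.single ∅ 1 := by
  funext a
  obtain rfl | ha := eq_or_ne a ∅
  · simp [conv, partitionSum_empty, hf, reciprocalCoeff]
  have sum_nonempty := sum_mul_partitionSum_sdiff (fun _ => 1) reciprocalCoeff f a
  simp only [one_mul, sum_const, nsmul_one] at sum_nonempty
  rw [conv_eq_add_sum_erase_empty, sum_nonempty, hf, one_mul, partitionSum, ← sum_add_distrib,
    Pi.single_eq_of_ne ha]
  refine sum_eq_zero fun p _ => ?_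
  obtain ⟨n, hn⟩ := Nat.exists_eq_succ_of_ne_zero (card_ne_zero.2 (p.parts_nonempty ha))
  rw [hn, Nat.succ_eq_add_one, reciprocalCoeff_succ, Nat.add_sub_cancel]
  ring

end PartitionSum

section Cumulant

-- `log (1 + t) = ∑ n ≥ 1, reciprocalCoeff (n - 1) * t ^ n / n!`; at `n = 0` the weight is `1`,
-- which matters only for the empty set.
theorem logStar_eq_partitionSum (f : Finset Ω → ℂ) :
    logStar f = partitionSum (fun n => reciprocalCoeff (n - 1)) fun c => f c / f ∅ := by
  funext a
  simp only [logStar, partitionSum, reciprocalCoeff, prod_div_distrib, prod_const, mul_div_assoc]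

theorem expStar_eq_exp_mul_partitionSum (g : Finset Ω → ℂ) (a : Finset Ω) :
    expStar g a = Complex.exp (g ∅) * partitionSum 1 g a := by
  obtain rfl | ha := eq_or_ne a ∅
  · simp [expStar, partitionSum_empty]
  · simp [expStar, partitionSum, ha]

theorem logStar_expStar_eq_partitionSum (g : Finset Ω → ℂ) :
    logStar (expStar g) = partitionSum (fun n => reciprocalCoeff (n - 1)) (partitionSum 1 g) := by
  rw [logStar_eq_partitionSum]
  congr 1
  funext c
  rw [expStar_eq_exp_mul_partitionSum, expStar_eq_exp_mul_partitionSum, partitionSum_empty,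
    Pi.one_apply, mul_one, mul_div_cancel_left₀ _ (Complex.exp_ne_zero _)]

theorem pointed_logStar_expStar (x : Ω) (g : Finset Ω → ℂ) :
    pointed x (logStar (expStar g)) = pointed x g := by
  set F := partitionSum 1 g
  have F_empty : F ∅ = 1 := partitionSum_empty 1 g
  calc pointed x (logStar (expStar g))
      = pointed x (partitionSum (fun n => reciprocalCoeff (n - 1)) F) := by
        rw [logStar_expStar_eq_partitionSum]
    _ = conv (pointed x F) (partitionSum reciprocalCoeff F) := pointed_partitionSum x _ F
    _ = conv (conv (pointed x g) F) (partitionSum reciprocalCoeff F) := by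
        congr 1
        exact pointed_partitionSum x 1 g
    _ = conv (pointed x g) (conv F (partitionSum reciprocalCoeff F)) := conv_assoc _ _ _
    _ = pointed x g := by
        rw [conv_partitionSum_reciprocalCoeff F F_empty, conv_single_empty_one]

end Cumulant

end MMap

theorem logStar_expStar_general {Ω : Type*} [DecidableEq Ω] (g : Finset Ω → ℂ) (a : Finset Ω)
    (ha : a.Nonempty) : MMap.logStar (MMap.expStar g) a = g a := by
  obtain ⟨x, hx⟩ := ha
  simpa only [MMap.pointed, hx, if_true] using congrFun (MMap.pointed_logStar_expStar x g) a

/-- For any M-map `g`, the cumulant of the anticumulant recovers `g`: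
`log*(exp* g)(a) = g(a)` for every nonempty subset `a ⊆ Ω`. -/
theorem logStar_expStar {Ω : Type*} [DecidableEq Ω] [Fintype Ω]
    (g : Finset Ω → ℂ) (a : Finset Ω) (ha : a.Nonempty) :
    MMap.logStar (MMap.expStar g) a = g a := by
  exact logStar_expStar_general g a ha
end

section
/- Let {A, B} be a bipartition of the finite set Ω (A ∩ B = ∅, A ∪ B = Ω), and let f be an M-map that factorizes with respect to {A, B} and satisfies f(∅) ≠ 0 (whence f(∅) = 1). Define M-maps f_A and f_B by f_A(c) = f(c) if c ⊆ A and f_A(c) = 0 otherwise, and f_B(c) = f(c) if c ⊆ B and f_B(c) = 0 otherwise. Then f = f_A * f_B. -/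
open Finset

/-- `f` factorizes with respect to the bipartition `{A, B}` of `Ω` if
`f(c) = f(c ∩ A)·f(c ∩ B)` for every subset `c ⊆ Ω`. -/
def MMap.Factorizes {Ω : Type*} [DecidableEq Ω] (f : Finset Ω → ℂ) (A B : Finset Ω) : Prop :=
  ∀ c : Finset Ω, f c = f (c ∩ A) * f (c ∩ B)

section GeneralizedBooleanAlgebra

variable {α : Type*} [GeneralizedBooleanAlgebra α] {a b c x : α}

theorem sdiff_eq_inf_of_disjoint_of_le_sup (hab : Disjoint a b) (hc : c ≤ a ⊔ b) :
    c \ a = c ⊓ b :=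
  le_antisymm (le_inf sdiff_le (sdiff_le_iff.2 hc))
    (le_sdiff.2 ⟨inf_le_left, hab.symm.mono_left inf_le_right⟩)

theorem le_and_sdiff_le_iff_eq_inf (hab : Disjoint a b) (hc : c ≤ a ⊔ b) (hx : x ≤ c) :
    x ≤ a ∧ c \ x ≤ b ↔ x = c ⊓ a := by
  constructor
  · rintro ⟨hxa, hcx⟩
    have hinf : c ⊓ a ≤ x := calc
      c ⊓ a ≤ (x ⊔ b) ⊓ a := inf_le_inf_right a (sdiff_le_iff.1 hcx)
      _ = x ⊓ a := by rw [inf_sup_right, hab.symm.eq_bot, sup_bot_eq]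
      _ ≤ x := inf_le_left
    exact le_antisymm (le_inf hx hxa) hinf
  · rintro rfl
    rw [sdiff_inf_self_left, sdiff_eq_inf_of_disjoint_of_le_sup hab hc]
    exact ⟨inf_le_right, inf_le_right⟩

end GeneralizedBooleanAlgebra

section Restrict

variable {Ω R : Type*} [DecidableEq Ω]

/-- The restriction `f_A` of a set function `f` to the subsets of `A`, extended by zero to all
finite sets. It is the factor attached to a block `A` of a bipartition. -/
def MMap.restrict [Zero R] (f : Finset Ω → R) (A : Finset Ω) : Finset Ω → R :=
  fun c => if c ⊆ A then f c else 0

variable [NonUnitalNonAssocSemiring R] {A B c : Finset Ω}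

-- Only `b = c ∩ A` satisfies both `b ⊆ A` and `c \ b ⊆ B`, so a single summand survives.
theorem MMap.sum_powerset_restrict_mul_restrict_sdiff (hAB : Disjoint A B) (hc : c ⊆ A ∪ B)
    (f g : Finset Ω → R) :
    ∑ b ∈ c.powerset, restrict f A b * restrict g B (c \ b) = f (c ∩ A) * g (c ∩ B) := by
  have summand_eq : ∀ b ∈ c.powerset, restrict f A b * restrict g B (c \ b) =
      if b = c ∩ A then f b * g (c \ b) else 0 := fun b hb => by
    have support_iff : b ⊆ A ∧ c \ b ⊆ B ↔ b = c ∩ A :=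
      le_and_sdiff_le_iff_eq_inf hAB hc (mem_powerset.1 hb)
    simp only [restrict, ite_zero_mul_ite_zero, support_iff]
  have sdiff_eq : c \ (c ∩ A) = c ∩ B :=
    (sdiff_inf_self_left c A).trans (sdiff_eq_inf_of_disjoint_of_le_sup hAB hc)
  rw [sum_congr rfl summand_eq, sum_ite_eq', if_pos (mem_powerset.2 inter_subset_left), sdiff_eq]

theorem factorizes_eq_conv_general (hAB : Disjoint A B) {f : Finset Ω → R}
    (hfact : ∀ c ⊆ A ∪ B, f c = f (c ∩ A) * f (c ∩ B)) (hc : c ⊆ A ∪ B) :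
    f c = ∑ b ∈ c.powerset, MMap.restrict f A b * MMap.restrict f B (c \ b) :=
  (hfact c hc).trans (MMap.sum_powerset_restrict_mul_restrict_sdiff hAB hc f f).symm

end Restrict

/-- If `{A, B}` is a bipartition of `Ω` and the M-map `f` factorizes with respect to
`{A, B}` with `f(∅) ≠ 0`, then `f = f_A * f_B`, where `f_A` agrees with `f` on
subsets of `A` and vanishes elsewhere, and similarly for `f_B`. -/
theorem factorizes_eq_conv {Ω : Type*} [DecidableEq Ω] [Fintype Ω]
    (A B : Finset Ω) (hAB : A ∩ B = ∅) (hUnion : A ∪ B = Finset.univ)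
    (f : Finset Ω → ℂ) (hfact : MMap.Factorizes f A B) (hf : f ∅ ≠ 0) :
    f = MMap.conv (fun c => if c ⊆ A then f c else 0) (fun c => if c ⊆ B then f c else 0) := by
  funext c
  exact factorizes_eq_conv_general (disjoint_iff_inter_eq_empty.2 hAB) (fun c _ => hfact c)
    (hUnion ▸ subset_univ c)
end

section
/- Let {A, B} be a bipartition of the finite set Ω, and let f be an M-map that factorizes with respect to {A, B} and satisfies f(∅) ≠ 0. Then the cumulant of f vanishes on every nonempty subset that meets both parts: log* f(c) = 0 for every nonempty c ⊆ Ω with c ⊄ A and c ⊄ B. -/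
open Finset

/-!
The cumulant is the logarithm for the convolution product, and it satisfies the moment–cumulant
recursion `∑_{d ⊆ c \ {x}} f(d) · log* f(c \ d) = f(c)` for each `x ∈ c`: regrouping the left-hand
side by the partition `{d} ∪ p` of `c`, where `p` partitions `c \ d`, every partition with at least
two blocks cancels. Now let `x ∈ c \ A` and argue by induction on `c`. Whenever `d ≠ ∅` misses a
point of `c ∩ A`, the set `c \ d` still meets both sides, so its term vanishes. By factorization the
terms with `c ∩ A ⊆ d` are `f(c ∩ A)` times the recursion for `c \ A`, and so already add up to
`f(c)`. Hence the one remaining term, `f(∅) · log* f(c)`, is zero.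
-/

section Finpartition

variable {α : Type*}

lemma finpartition_sup_erase [GeneralizedBooleanAlgebra α] [DecidableEq α] {a d : α}
    (q : Finpartition a) (hd : d ∈ q.parts) : (q.parts.erase d).sup id = a \ d := by
  have hdisj : Disjoint d ((q.parts.erase d).sup id) :=
    q.supIndep (erase_subset d q.parts) hd (notMem_erase d q.parts)
  have hsup : d ⊔ (q.parts.erase d).sup id = a := by
    calc
      _ = (insert d (q.parts.erase d)).sup id := sup_insert.symm
      _ = a := by rw [insert_erase hd, q.sup_parts]
  calc
    _ = (d ⊔ (q.parts.erase d).sup id) \ d := by rw [sup_sdiff_left_self, hdisj.sdiff_eq_right]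
    _ = a \ d := by rw [hsup]

/-- Removing a fixed block `d` identifies the partitions of `a` having `d` as a block with the
partitions of `a \ d`. -/
def finpartitionMemPartsEquiv [GeneralizedBooleanAlgebra α] [DecidableEq α] {a d : α}
    (hd : d ≠ ⊥) (hda : d ≤ a) :
    {q : Finpartition a // d ∈ q.parts} ≃ Finpartition (a \ d) where
  toFun q := q.1.ofSubset (erase_subset d q.1.parts) (finpartition_sup_erase q.1 q.2)
  invFun p :=
    ⟨p.extend hd disjoint_sdiff_self_left (sdiff_sup_cancel hda), mem_insert_self d p.parts⟩
  left_inv q := Subtype.ext <| Finpartition.ext <| insert_erase q.2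
  right_inv p := Finpartition.ext <| erase_insert fun h ↦
    hd <| disjoint_sdiff_self_right.eq_bot_of_le (p.le h)

lemma finpartition_parts_nontrivial [Lattice α] [OrderBot α] {a : α} (ha : a ≠ ⊥)
    {q : Finpartition a} (hq : q ≠ Finpartition.indiscrete ha) : q.parts.Nontrivial := by
  refine (q.parts_nonempty ha).exists_eq_singleton_or_nontrivial.resolve_left ?_
  rintro ⟨b, hb⟩
  have hba : b = a := by simpa [hb] using q.sup_parts
  exact hq <| Finpartition.ext <| by rw [hb, hba, Finpartition.indiscrete_parts]

lemma sum_finpartition_sdiff_eq_sum_mem_parts [DecidableEq α] {M : Type*} [AddCommMonoid M]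
    {c d : Finset α} (hd : d ≠ ∅) (hdc : d ⊆ c) (F : Finset (Finset α) → M) :
    ∑ p : Finpartition (c \ d), F p.parts
      = ∑ q : Finpartition c with d ∈ q.parts, F (q.parts.erase d) := by
  rw [← sum_subtype_eq_sum_filter, subtype_univ]
  exact (Fintype.sum_equiv (finpartitionMemPartsEquiv hd hdc) _ _ fun _ ↦ rfl).symm

lemma sum_sum_finpartition_sdiff_eq_sum_sum_parts_erase [DecidableEq α] {M : Type*}
    [AddCommMonoid M] (c : Finset α) (x : α) (F : Finset α → Finset (Finset α) → M) :
    ∑ d ∈ (c.erase x).powerset.erase ∅, ∑ p : Finpartition (c \ d), F d p.parts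
      = ∑ q : Finpartition c, ∑ d ∈ q.parts.erase (q.part x), F d (q.parts.erase d) := by
  calc
    _ = ∑ d ∈ (c.erase x).powerset.erase ∅,
          ∑ q : Finpartition c with d ∈ q.parts, F d (q.parts.erase d) := by
      refine sum_congr rfl fun d hd ↦ ?_
      rw [mem_erase, mem_powerset] at hd
      exact sum_finpartition_sdiff_eq_sum_mem_parts hd.1 (hd.2.trans (erase_subset x c)) (F d)
    _ = _ := by
      refine sum_comm' fun d q ↦ ?_
      have hblock (hd : d ∈ q.parts) : d ≠ ∅ ∧ d ⊆ c ∧ (d = q.part x ↔ x ∈ d) :=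
        ⟨q.ne_empty hd, q.subset hd, eq_comm.trans (q.part_eq_iff_mem hd)⟩
      simp only [mem_erase, mem_powerset, mem_filter, mem_univ, subset_erase]
      tauto

end Finpartition

namespace MMap

variable {Ω : Type*} {f : Finset Ω → ℂ}

/-- The contribution to `log* f` of a partition whose set of blocks is `P`. It is defined for
arbitrary families `P` so that blocks can be removed without changing types; on `P = ∅` it takes
the junk value `1`. -/
noncomputable def logStarSummand (f : Finset Ω → ℂ) (P : Finset (Finset Ω)) : ℂ :=
  (Nat.factorial (#P - 1) : ℂ) * (-1 : ℂ) ^ (#P - 1) * (∏ c ∈ P, f c) / (f ∅) ^ #P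

lemma mul_logStarSummand_singleton (hf : f ∅ ≠ 0) (c : Finset Ω) :
    f ∅ * logStarSummand f {c} = f c := by
  simp [logStarSummand, mul_div_cancel₀ _ hf]

variable [DecidableEq Ω]

lemma logStar_eq_sum_logStarSummand (f : Finset Ω → ℂ) (a : Finset Ω) :
    logStar f a = ∑ p : Finpartition a, logStarSummand f p.parts := rfl

lemma sum_mul_logStarSummand_erase (hf : f ∅ ≠ 0) {P : Finset (Finset Ω)} (hP : P.Nontrivial)
    {e : Finset Ω} (he : e ∈ P) :
    ∑ d ∈ P.erase e, f d * logStarSummand f (P.erase d) = -(f ∅ * logStarSummand f P) := by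
  obtain ⟨k, hk⟩ : ∃ k, #P = k + 2 := Nat.exists_eq_add_of_le' (one_lt_card_iff_nontrivial.2 hP)
  have hcard {d : Finset Ω} (hd : d ∈ P) : #(P.erase d) = k + 1 := by
    rw [card_erase_of_mem hd, hk]; rfl
  have hterm (d : Finset Ω) (hd : d ∈ P.erase e) : f d * logStarSummand f (P.erase d)
      = (Nat.factorial k : ℂ) * (-1) ^ k * (∏ c ∈ P, f c) / f ∅ ^ (k + 1) := by
    rw [logStarSummand, hcard (mem_of_mem_erase hd), ← mul_prod_erase P f (mem_of_mem_erase hd),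
      Nat.add_sub_cancel]
    ring
  rw [sum_congr rfl hterm, sum_const, hcard he, nsmul_eq_mul, logStarSummand, hk,
    show k + 2 - 1 = k + 1 from rfl, Nat.factorial_succ]
  push_cast
  field_simp
  ring

theorem sum_mul_logStar_sdiff (hf : f ∅ ≠ 0) {c : Finset Ω} {x : Ω} (hx : x ∈ c) :
    ∑ d ∈ (c.erase x).powerset, f d * logStar f (c \ d) = f c := by
  have hc : c ≠ ⊥ := ne_empty_of_mem hx
  calc
    _ = f ∅ * logStar f c
          + ∑ d ∈ (c.erase x).powerset.erase ∅, f d * logStar f (c \ d) := by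
      rw [← add_sum_erase _ _ (empty_mem_powerset _), sdiff_empty]
    _ = ∑ q : Finpartition c, (f ∅ * logStarSummand f q.parts
          + ∑ d ∈ q.parts.erase (q.part x), f d * logStarSummand f (q.parts.erase d)) := by
      simp only [logStar_eq_sum_logStarSummand, mul_sum, sum_add_distrib]
      rw [sum_sum_finpartition_sdiff_eq_sum_sum_parts_erase c x
        fun d P ↦ f d * logStarSummand f P]
    _ = f ∅ * logStarSummand f {c} := by
      rw [Fintype.sum_eq_single (Finpartition.indiscrete hc)]
      · have hpart : (Finpartition.indiscrete hc).part x = c :=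
          (Finpartition.indiscrete hc).part_eq_of_mem (mem_singleton_self c) hx
        rw [hpart, Finpartition.indiscrete_parts, erase_singleton, sum_empty, add_zero]
      · intro q hq
        rw [sum_mul_logStarSummand_erase hf (finpartition_parts_nontrivial hc hq)
          (q.part_mem.2 hx), add_neg_cancel]
    _ = f c := mul_logStarSummand_singleton hf c

lemma sum_Icc_mul_logStar_sdiff (hf : f ∅ ≠ 0) {b c : Finset Ω} (hbc : b ⊆ c)
    (hmul : ∀ e ⊆ c \ b, f (b ∪ e) = f b * f e) {x : Ω} (hx : x ∈ c \ b) :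
    ∑ d ∈ Icc b (c.erase x), f d * logStar f (c \ d) = f c := by
  have hbx : b ⊆ c.erase x := subset_erase.2 ⟨hbc, (mem_sdiff.1 hx).2⟩
  have hinj : Set.InjOn (b ∪ ·) (((c \ b).erase x).powerset : Set (Finset Ω)) := by
    intro e he e' he' h
    have hdisj {e : Finset Ω} (he : e ∈ ((c \ b).erase x).powerset) : Disjoint b e :=
      disjoint_sdiff.mono_right ((mem_powerset.1 he).trans (erase_subset x _))
    rw [← union_sdiff_cancel_left (hdisj he), ← union_sdiff_cancel_left (hdisj he')]
    exact congrArg (· \ b) h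
  calc
    _ = ∑ e ∈ ((c \ b).erase x).powerset, f (b ∪ e) * logStar f (c \ (b ∪ e)) := by
      rw [Icc_eq_image_powerset hbx, erase_sdiff_comm, sum_image hinj]
    _ = f b * ∑ e ∈ ((c \ b).erase x).powerset, f e * logStar f ((c \ b) \ e) := by
      rw [mul_sum]
      refine sum_congr rfl fun e he ↦ ?_
      rw [hmul e ((mem_powerset.1 he).trans (erase_subset x _)), sdiff_sdiff_left, sup_eq_union,
        mul_assoc]
    _ = f b * f (c \ b) := by rw [sum_mul_logStar_sdiff hf hx]
    _ = f c := by rw [← hmul _ subset_rfl, union_sdiff_of_subset hbc]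

lemma logStar_eq_zero_of_logStar_sdiff_eq_zero (hf : f ∅ ≠ 0) {b c : Finset Ω} (hb : b ≠ ∅)
    (hbc : b ⊆ c) (hmul : ∀ e ⊆ c \ b, f (b ∪ e) = f b * f e) {x : Ω} (hx : x ∈ c \ b)
    (hzero : ∀ d ⊆ c.erase x, d ≠ ∅ → ¬ b ⊆ d → logStar f (c \ d) = 0) :
    logStar f c = 0 := by
  have hempty : ∅ ∉ Icc b (c.erase x) := fun h ↦ hb <| subset_empty.1 (mem_Icc.1 h).1
  have hsub : insert ∅ (Icc b (c.erase x)) ⊆ (c.erase x).powerset :=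
    insert_subset (empty_mem_powerset _) fun d hd ↦ mem_powerset.2 (mem_Icc.1 hd).2
  have hsplit : f ∅ * logStar f c + f c = f c := by
    calc
      _ = f ∅ * logStar f c + ∑ d ∈ Icc b (c.erase x), f d * logStar f (c \ d) := by
        rw [sum_Icc_mul_logStar_sdiff hf hbc hmul hx]
      _ = ∑ d ∈ insert ∅ (Icc b (c.erase x)), f d * logStar f (c \ d) := by
        rw [sum_insert hempty, sdiff_empty]
      _ = ∑ d ∈ (c.erase x).powerset, f d * logStar f (c \ d) := by
        refine sum_subset hsub fun d hd hd' ↦ ?_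
        rw [mem_insert, not_or, mem_Icc] at hd'
        rw [mem_powerset] at hd
        rw [hzero d hd hd'.1 fun hbd ↦ hd'.2 ⟨hbd, hd⟩, mul_zero]
      _ = f c := sum_mul_logStar_sdiff hf (mem_sdiff.1 hx).1
  exact (mul_eq_zero.1 (add_eq_right.1 hsplit)).resolve_left hf

end MMap

theorem logStar_factorizes_eq_zero_general {Ω : Type*} [DecidableEq Ω] {f : Finset Ω → ℂ}
    (hf : f ∅ ≠ 0) {A c : Finset Ω} (hfact : ∀ d ⊆ c, f d = f (d ∩ A) * f (d \ A))
    (hcA : ¬ c ⊆ A) (hcA' : ¬ Disjoint c A) : MMap.logStar f c = 0 := by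
  induction c using Finset.strongInduction with
  | H c ih =>
  obtain ⟨x, hxc, hxA⟩ := not_subset.1 hcA
  have hmul (e : Finset Ω) (he : e ⊆ c \ (c ∩ A)) : f (c ∩ A ∪ e) = f (c ∩ A) * f e := by
    have heA : Disjoint e A := sdiff_disjoint.mono_left (he.trans_eq (sdiff_inter_self_left c A))
    have hinter : (c ∩ A ∪ e) ∩ A = c ∩ A := by
      rw [union_inter_distrib_right, disjoint_iff_inter_eq_empty.1 heA, union_empty, inter_assoc,
        inter_self]
    have hsdiff : (c ∩ A ∪ e) \ A = e := by
      rw [union_sdiff_distrib, heA.sdiff_eq_left, sdiff_eq_empty_iff_subset.2 inter_subset_right,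
        empty_union]
    rw [hfact _ (union_subset inter_subset_left (he.trans sdiff_subset)), hinter, hsdiff]
  refine MMap.logStar_eq_zero_of_logStar_sdiff_eq_zero hf (disjoint_iff_inter_eq_empty.not.1 hcA')
    inter_subset_left hmul (x := x) (by simp [hxc, hxA]) fun d hd hd₀ hdA ↦ ?_
  obtain ⟨y, hy, hyd⟩ := not_subset.1 hdA
  obtain ⟨hyc, hyA⟩ := mem_inter.1 hy
  obtain ⟨hdc, hxd⟩ := subset_erase.1 hd
  exact ih (c \ d) (sdiff_ssubset hdc (nonempty_iff_ne_empty.2 hd₀))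
    (fun e he ↦ hfact e (he.trans sdiff_subset))
    (not_subset.2 ⟨x, mem_sdiff.2 ⟨hxc, hxd⟩, hxA⟩)
    (not_disjoint_iff.2 ⟨y, mem_sdiff.2 ⟨hyc, hyd⟩, hyA⟩)

/-- If the M-map `f` factorizes with respect to a bipartition `{A, B}` of `Ω` and
`f(∅) ≠ 0`, then its cumulant vanishes on every nonempty subset meeting both
parts: `log* f(c) = 0` whenever `c ⊄ A` and `c ⊄ B`. -/
theorem logStar_factorizes_eq_zero {Ω : Type*} [DecidableEq Ω] [Fintype Ω]
    (A B : Finset Ω) (hAB : A ∩ B = ∅) (hUnion : A ∪ B = Finset.univ)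
    (f : Finset Ω → ℂ) (hfact : MMap.Factorizes f A B) (hf : f ∅ ≠ 0)
    (c : Finset Ω) (hc : c.Nonempty) (hcA : ¬ c ⊆ A) (hcB : ¬ c ⊆ B) :
    MMap.logStar f c = 0 := by
  obtain rfl : B = Aᶜ := (IsCompl.of_eq hAB hUnion).compl_eq.symm
  exact logStar_factorizes_eq_zero_general hf (fun d _ ↦ sdiff_eq_inter_compl d A ▸ hfact d) hcA
    (subset_compl_iff_disjoint_right.not.1 hcB)
end

section
/- Let φ, ψ : ℝⁿ → ℂ be measurable functions such that for every subset a ⊆ {1,…,n} the functions x ↦ (∏_{i∈a} x_i)·φ(x) and x ↦ (∏_{i∈a} x_i)·ψ(x) are (Lebesgue) integrable on ℝⁿ. Define the moment maps f_φ(a) = ∫_{ℝⁿ} (∏_{i∈a} x_i) φ(x) dx and f_ψ(a) = ∫_{ℝⁿ} (∏_{i∈a} x_i) ψ(x) dx, and let (φ ⋆ ψ)(y) = ∫_{ℝⁿ} φ(x) ψ(y − x) dx denote the convolution of φ and ψ. Then for every a ⊆ {1,…,n}, the moment ∫_{ℝⁿ} (∏_{i∈a} y_i)(φ ⋆ ψ)(y)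 dy exists and equals (f_φ * f_ψ)(a) = Σ_{b ⊆ a} f_φ(b)·f_ψ(a \ b). -/
open Finset MeasureTheory

/-- The moment M-map of an integrable function `φ : ℝⁿ → ℂ`:
`f_φ(a) = ∫ (∏_{i∈a} x_i) φ(x) dx`. -/
noncomputable def momentMap (n : ℕ) (φ : (Fin n → ℝ) → ℂ) : Finset (Fin n) → ℂ :=
  fun a => ∫ x : Fin n → ℝ, (∏ i ∈ a, (x i : ℂ)) * φ x

/-!
Expanding `∏ i ∈ a, y i = ∏ i ∈ a, (x i + (y - x) i)` over the subsets `b ⊆ a` distributes the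
monomial weight over the two factors of the convolution. Writing `x ^ a` for `∏ i ∈ a, x i`, almost
everywhere `x ^ a • (φ ⋆ ψ)` is the sum over `b ⊆ a` of the convolutions of `x ^ b • φ` with
`x ^ (a \ b) • ψ`. A convolution of integrable functions is integrable, and its integral is the
product of the integrals.
-/

open scoped Convolution

section MomentDensity

variable {𝕜 G E E' F ι : Type*}

/-- The integrand `x ↦ (∏ i ∈ a, χ i x) • φ x` of the moment of `φ` indexed by `a`. An arbitrary
family `χ` of additive maps takes the place of the coordinates of `ℝⁿ`. -/
def momentDensity [CommSemiring 𝕜] [AddZeroClass G] [AddCommMonoid E] [Module 𝕜 E]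
    (χ : ι → G →+ 𝕜) (φ : G → E) (a : Finset ι) : G → E :=
  fun x => (∏ i ∈ a, χ i x) • φ x

theorem prod_map_eq_sum_powerset_sub [DecidableEq ι] [CommRing 𝕜] [AddGroup G]
    (χ : ι → G →+ 𝕜) (a : Finset ι) (x y : G) :
    ∏ i ∈ a, χ i y =
      ∑ b ∈ a.powerset, (∏ i ∈ b, χ i x) * ∏ i ∈ a \ b, χ i (y - x) := by
  simp only [← prod_add, map_sub, add_sub_cancel]

variable [DecidableEq ι] [AddGroup G]
  [NormedAddCommGroup E] [NormedAddCommGroup E'] [NormedAddCommGroup F]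

section NontriviallyNormedField

variable [NontriviallyNormedField 𝕜] [NormedSpace 𝕜 E] [NormedSpace 𝕜 E'] [NormedSpace 𝕜 F]
  (L : E →L[𝕜] E' →L[𝕜] F) (χ : ι → G →+ 𝕜) (φ : G → E) (ψ : G → E')

theorem prod_smul_bilin_sub_eq_sum_momentDensity (a : Finset ι) (x y : G) :
    (∏ i ∈ a, χ i y) • L (φ x) (ψ (y - x)) =
      ∑ b ∈ a.powerset, L (momentDensity χ φ b x) (momentDensity χ ψ (a \ b) (y - x)) := by
  simp only [prod_map_eq_sum_powerset_sub χ a x y, sum_smul, momentDensity, map_smul,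
    smul_apply, smul_smul, mul_comm]

variable [MeasurableSpace G] {μ : Measure G}
  [NormedSpace ℝ F] [SMulCommClass ℝ 𝕜 F] {χ φ ψ}

theorem momentDensity_convolution_apply {a : Finset ι} {y : G}
    (h : ∀ b ⊆ a, ConvolutionExistsAt (momentDensity χ φ b) (momentDensity χ ψ (a \ b)) y L μ) :
    momentDensity χ (φ ⋆[L, μ] ψ) a y =
      ∑ b ∈ a.powerset, (momentDensity χ φ b ⋆[L, μ] momentDensity χ ψ (a \ b)) y := by
  calc (∏ i ∈ a, χ i y) • ∫ x, L (φ x) (ψ (y - x)) ∂μ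
      = ∫ x, (∏ i ∈ a, χ i y) • L (φ x) (ψ (y - x)) ∂μ := (integral_smul _ _).symm
    _ = ∫ x, ∑ b ∈ a.powerset,
          L (momentDensity χ φ b x) (momentDensity χ ψ (a \ b) (y - x)) ∂μ := by
        simp only [prod_smul_bilin_sub_eq_sum_momentDensity]
    _ = ∑ b ∈ a.powerset, (momentDensity χ φ b ⋆[L, μ] momentDensity χ ψ (a \ b)) y :=
        integral_finsetSum _ fun b hb => h b (mem_powerset.mp hb)

theorem momentDensity_convolution_ae_eq [MeasurableAdd₂ G] [MeasurableNeg G] [SFinite μ]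
    [μ.IsAddRightInvariant] {a : Finset ι}
    (hφ : ∀ b ⊆ a, Integrable (momentDensity χ φ b) μ)
    (hψ : ∀ b ⊆ a, Integrable (momentDensity χ ψ b) μ) :
    momentDensity χ (φ ⋆[L, μ] ψ) a =ᵐ[μ] fun y =>
      ∑ b ∈ a.powerset, (momentDensity χ φ b ⋆[L, μ] momentDensity χ ψ (a \ b)) y := by
  have hexists : ∀ᵐ y ∂μ, ∀ b ∈ a.powerset,
      ConvolutionExistsAt (momentDensity χ φ b) (momentDensity χ ψ (a \ b)) y L μ :=
    (Finset.eventually_all _).mpr fun b hb =>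
      (hφ b (mem_powerset.mp hb)).ae_convolution_exists L (hψ _ sdiff_subset)
  filter_upwards [hexists] with y hy
  exact momentDensity_convolution_apply L fun b hb => hy b (mem_powerset.mpr hb)

end NontriviallyNormedField

theorem momentMap_convolution_general [RCLike 𝕜]
    [NormedSpace 𝕜 E] [NormedSpace ℝ E] [CompleteSpace E]
    [NormedSpace 𝕜 E'] [NormedSpace ℝ E'] [CompleteSpace E']
    [NormedSpace 𝕜 F] [NormedSpace ℝ F] [CompleteSpace F]
    [MeasurableSpace G] [MeasurableAdd₂ G] [MeasurableNeg G]
    {μ : Measure G} [SFinite μ] [μ.IsAddRightInvariant]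
    (L : E →L[𝕜] E' →L[𝕜] F) {χ : ι → G →+ 𝕜} {φ : G → E} {ψ : G → E'} {a : Finset ι}
    (hφ : ∀ b ⊆ a, Integrable (momentDensity χ φ b) μ)
    (hψ : ∀ b ⊆ a, Integrable (momentDensity χ ψ b) μ) :
    Integrable (momentDensity χ (φ ⋆[L, μ] ψ) a) μ ∧
    ∫ y, momentDensity χ (φ ⋆[L, μ] ψ) a y ∂μ =
      ∑ b ∈ a.powerset,
        L (∫ x, momentDensity χ φ b x ∂μ) (∫ x, momentDensity χ ψ (a \ b) x ∂μ) := by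
  have hexpand := momentDensity_convolution_ae_eq L hφ hψ
  have hterm : ∀ b ∈ a.powerset,
      Integrable (momentDensity χ φ b ⋆[L, μ] momentDensity χ ψ (a \ b)) μ := fun b hb =>
    (hφ b (mem_powerset.mp hb)).integrable_convolution L (hψ _ sdiff_subset)
  refine ⟨(integrable_finsetSum _ hterm).congr hexpand.symm, ?_⟩
  rw [integral_congr_ae hexpand, integral_finsetSum _ hterm]
  exact sum_congr rfl fun b hb =>
    integral_convolution L (hφ b (mem_powerset.mp hb)) (hψ _ sdiff_subset)

end MomentDensity

/-- If all moments of `φ` and `ψ` exist, then the moments of the convolution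
`φ ⋆ ψ` exist and are given by the convolution product of the moment M-maps:
`∫ (∏_{i∈a} y_i)(φ ⋆ ψ)(y) dy = (f_φ * f_ψ)(a)`. -/
theorem momentMap_convolution (n : ℕ) (φ ψ : (Fin n → ℝ) → ℂ)
    (hφm : Measurable φ) (hψm : Measurable ψ)
    (hφ : ∀ a : Finset (Fin n),
      Integrable (fun x : Fin n → ℝ => (∏ i ∈ a, (x i : ℂ)) * φ x))
    (hψ : ∀ a : Finset (Fin n),
      Integrable (fun x : Fin n → ℝ => (∏ i ∈ a, (x i : ℂ)) * ψ x))
    (a : Finset (Fin n)) :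
    Integrable (fun y : Fin n → ℝ =>
        (∏ i ∈ a, (y i : ℂ)) * ∫ x : Fin n → ℝ, φ x * ψ (y - x)) ∧
    (∫ y : Fin n → ℝ, (∏ i ∈ a, (y i : ℂ)) * ∫ x : Fin n → ℝ, φ x * ψ (y - x)) =
      MMap.conv (momentMap n φ) (momentMap n ψ) a :=
  momentMap_convolution_general (ContinuousLinearMap.mul ℂ ℂ)
    (χ := fun i => Complex.ofRealHom.toAddMonoidHom.comp (Pi.evalAddMonoidHom (fun _ => ℝ) i))
    (fun b _ => hφ b) (fun b _ => hψ b)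
end

section
/- Let h : ℝⁿ → ℝ be infinitely differentiable with h(0) > 0. For a subset a = {a_1,…,a_k} ⊆ {1,…,n} let ∂_a h(0) denote the mixed partial derivative ∂^k h/∂x_{a_1}⋯∂x_{a_k} evaluated at 0 (with ∂_∅ h(0) = h(0)). Then for every nonempty a ⊆ {1,…,n}, ∂_a (log ∘ h)(0) = Σ_{p} (|p|−1)!·(−1)^{|p|−1}·(∏_{c ∈ p} ∂_c h(0)) / h(0)^{|p|}, the sum running over all set partitions p of a, with |p| the number of blocks of p. -/
open Finset

/-- The mixed partial derivative `∂_a h(x)` of `h : ℝⁿ → E` with respect to the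
(distinct) coordinates indexed by the finite set `a = {a_1 < ⋯ < a_k}`, defined by
feeding the corresponding standard basis vectors to the `k`-th iterated Fréchet
derivative.  For smooth `h` this is the usual mixed partial derivative
`∂^k h/∂x_{a_1}⋯∂x_{a_k}(x)` (independent of the order of differentiation), and
`∂_∅ h(x) = h(x)`. -/
noncomputable def mixedPartial {n : ℕ} {E : Type*} [NormedAddCommGroup E]
    [NormedSpace ℝ E] (h : (Fin n → ℝ) → E) (a : Finset (Fin n)) (x : Fin n → ℝ) : E :=
  iteratedFDeriv ℝ a.card h x (fun i => Pi.single (a.orderEmbOfFin rfl i) 1)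

/-!
Mixed partial derivatives are taken one coordinate at a time, in decreasing order of the
coordinates. Applying `∂_i` to a term `(∏_{c ∈ p} ∂_c h) · g^{(|p|)} ∘ h` either turns one block `c`
into `c ∪ {i}` (product rule) or creates the block `{i}` (chain rule); reading the latter as the
enlargement of the empty block, these are exactly the ways of extending a partition of `a` to one
of `a ∪ {i}`. Induction on `a` gives the partition form of Faà di Bruno's formula for `g ∘ h`, and
`log^{(k)}(y) = (-1)^{k-1} (k-1)! y^{-k}` specializes it to the logarithm.
-/

section Finpartition

variable {α : Type*} [DecidableEq α] {a c : Finset α} {i : α}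

theorem sup_parts_erase (p : Finpartition a) (hc : c ∈ insert ∅ p.parts) :
    (p.parts.erase c).sup id = a \ c := by
  ext j
  simp only [mem_sup, id_eq, mem_sdiff, mem_erase]
  constructor
  · rintro ⟨d, ⟨hdc, hd⟩, hjd⟩
    refine ⟨p.subset hd hjd, fun hjc => ?_⟩
    rcases mem_insert.1 hc with rfl | hc
    · exact notMem_empty j hjc
    · exact hdc (p.eq_of_mem_parts hd hc hjd hjc)
  · rintro ⟨hja, hjc⟩
    obtain ⟨d, hd, hjd⟩ := p.exists_mem hja
    exact ⟨d, ⟨fun hdc => hjc (hdc ▸ hjd), hd⟩, hjd⟩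

theorem subset_of_mem_insert_empty_parts (p : Finpartition a) (hc : c ∈ insert ∅ p.parts) :
    c ⊆ a := by
  rcases mem_insert.1 hc with rfl | hc
  exacts [empty_subset a, p.subset hc]

/-- The partition of `insert i a` obtained from a partition `p` of `a` by adding the new element `i`
to the block `c` of `p`. The value `c = ∅` is allowed as well, and makes `{i}` a new block. -/
def insertIntoPart (p : Finpartition a) (hi : i ∉ a) (hc : c ∈ insert ∅ p.parts) :
    Finpartition (insert i a) :=
  (p.ofSubset (erase_subset c p.parts) (sup_parts_erase p hc)).extend (insert_ne_empty i c)
    (by simp [disjoint_insert_right, hi, sdiff_disjoint])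
    (by
      have hca := subset_of_mem_insert_empty_parts p hc
      rw [sup_eq_union, union_insert, sdiff_union_of_subset hca])

theorem parts_insertIntoPart (p : Finpartition a) (hi : i ∉ a) (hc : c ∈ insert ∅ p.parts) :
    (insertIntoPart p hi hc).parts = insert (insert i c) (p.parts.erase c) :=
  rfl

theorem part_insertIntoPart (p : Finpartition a) (hi : i ∉ a) (hc : c ∈ insert ∅ p.parts) :
    (insertIntoPart p hi hc).part i = insert i c :=
  (insertIntoPart p hi hc).part_eq_of_mem (mem_insert_self _ _) (mem_insert_self i c)

theorem mem_parts_restrict_subset_insert (q : Finpartition (insert i a)) (hi : i ∉ a) :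
    c ∈ (q.restrict (subset_insert i a)).parts ↔ c ≠ ∅ ∧ ∃ d ∈ q.parts, d.erase i = c := by
  have inter_eq_erase : ∀ d ∈ q.parts, d ∩ a = d.erase i := fun d hd => by
    have := q.subset hd
    grind
  simp only [Finpartition.restrict, mem_erase, mem_image, bot_eq_empty, inf_eq_inter]
  exact and_congr_right' <| exists_congr fun d => and_congr_right fun hd => by
    rw [inter_eq_erase d hd]

theorem restrict_insertIntoPart (p : Finpartition a) (hi : i ∉ a) (hc : c ∈ insert ∅ p.parts) :
    (insertIntoPart p hi hc).restrict (subset_insert i a) = p := by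
  have notMem_part : ∀ d ∈ p.parts, i ∉ d := fun d hd hid => hi (p.subset hd hid)
  have hic : i ∉ c := fun hic => hi (subset_of_mem_insert_empty_parts p hc hic)
  ext d
  simp only [mem_parts_restrict_subset_insert _ hi, parts_insertIntoPart, exists_mem_insert,
    erase_insert hic]
  constructor
  · rintro ⟨hne, rfl | ⟨e, he, rfl⟩⟩
    · exact (mem_insert.1 hc).resolve_left hne
    · rw [erase_eq_of_notMem (notMem_part e (mem_of_mem_erase he))]
      exact mem_of_mem_erase he
  · exact fun hd => ⟨p.ne_empty hd, or_iff_not_imp_left.2 fun hcd =>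
      ⟨d, mem_erase.2 ⟨Ne.symm hcd, hd⟩, erase_eq_of_notMem (notMem_part d hd)⟩⟩

theorem erase_part_mem_insert_empty_parts_restrict (q : Finpartition (insert i a)) (hi : i ∉ a) :
    (q.part i).erase i ∈ insert ∅ (q.restrict (subset_insert i a)).parts := by
  rw [mem_insert, mem_parts_restrict_subset_insert q hi]
  exact or_iff_not_imp_left.2 fun hne => ⟨hne, q.part i, q.part_mem.2 (mem_insert_self i a), rfl⟩

theorem insertIntoPart_restrict (q : Finpartition (insert i a)) (hi : i ∉ a) :
    insertIntoPart (q.restrict (subset_insert i a)) hi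
      (erase_part_mem_insert_empty_parts_restrict q hi) = q := by
  have hia := mem_insert_self i a
  have hpart : q.part i ∈ q.parts := q.part_mem.2 hia
  have erase_eq : ∀ d ∈ q.parts, d ≠ q.part i → d.erase i = d := fun d hd hne =>
    erase_eq_of_notMem fun hid => hne (q.part_eq_of_mem hd hid).symm
  ext d
  rw [parts_insertIntoPart, insert_erase (q.mem_part hia), mem_insert, mem_erase,
    mem_parts_restrict_subset_insert q hi]
  constructor
  · rintro (rfl | ⟨hne, -, e, he, rfl⟩)
    · exact hpart
    · rwa [erase_eq e he fun hei => hne (hei ▸ rfl)]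
  · refine fun hd => or_iff_not_imp_left.2 fun hne =>
      ⟨fun hd_erase => ?_, q.ne_empty hd, d, hd, erase_eq d hd hne⟩
    obtain ⟨j, hj⟩ := q.nonempty_of_mem_parts hd
    exact hne (q.eq_of_mem_parts hd hpart hj (mem_of_mem_erase (hd_erase ▸ hj)))

theorem sum_finpartition_insert {M : Type*} [AddCommMonoid M] (hi : i ∉ a)
    (f : Finset (Finset α) → M) :
    ∑ q : Finpartition (insert i a), f q.parts =
      ∑ p : Finpartition a, ∑ c ∈ insert ∅ p.parts, f (insert (insert i c) (p.parts.erase c)) := by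
  rw [sum_sigma', eq_comm]
  refine sum_bij' (fun x hx => insertIntoPart x.1 hi (mem_sigma.1 hx).2)
    (fun q _ => ⟨q.restrict (subset_insert i a), (q.part i).erase i⟩) (fun _ _ => mem_univ _)
    (fun q _ => mem_sigma.2 ⟨mem_univ _, erase_part_mem_insert_empty_parts_restrict q hi⟩) ?_
    (fun q _ => insertIntoPart_restrict q hi) (fun _ _ => rfl)
  rintro ⟨p, c⟩ hpc
  have hc : c ∈ insert ∅ p.parts := (mem_sigma.1 hpc).2
  have hic : i ∉ c := fun hic => hi (subset_of_mem_insert_empty_parts p hc hic)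
  simp only [restrict_insertIntoPart, part_insertIntoPart, erase_insert hic]

theorem sum_finpartition_empty {M : Type*} [AddCommMonoid M] (f : Finset (Finset α) → M) :
    ∑ p : Finpartition (∅ : Finset α), f p.parts = f ∅ :=
  Fintype.sum_unique (ι := Finpartition (⊥ : Finset α)) fun p => f p.parts

end Finpartition

theorem orderEmbOfFin_insert_of_forall_lt {α : Type*} [LinearOrder α] {a : Finset α} {i : α}
    (hi : ∀ j ∈ a, i < j) (hcard : #(insert i a) = #a + 1) :
    ⇑((insert i a).orderEmbOfFin hcard) = Fin.cons i (a.orderEmbOfFin rfl) := by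
  refine (orderEmbOfFin_unique hcard (fun k => ?_) ?_).symm
  · cases k using Fin.cases <;> simp
  · exact Fin.strictMono_cons.2
      ⟨fun k => hi _ (orderEmbOfFin_mem a rfl k), (a.orderEmbOfFin rfl).strictMono⟩

theorem differentiableAt_iteratedDeriv {𝕜 E : Type*} [NontriviallyNormedField 𝕜]
    [NormedAddCommGroup E] [NormedSpace 𝕜 E] {g : 𝕜 → E} {y : 𝕜} {k : ℕ} {m : WithTop ℕ∞}
    (hg : ContDiffAt 𝕜 m g y) (hk : k < m) : DifferentiableAt 𝕜 (iteratedDeriv k g) y :=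
  (hg.differentiableAt_iteratedFDeriv hk).continuousMultilinear_apply_const _

theorem iteratedDeriv_succ_real_log (k : ℕ) (y : ℝ) :
    iteratedDeriv (k + 1) Real.log y = (-1) ^ k * k.factorial * y ^ (-1 - k : ℤ) := by
  rw [iteratedDeriv_succ', Real.deriv_log', iteratedDeriv_eq_iterate, iter_deriv_inv]

section MixedPartial

variable {n : ℕ} {E : Type*} [NormedAddCommGroup E] [NormedSpace ℝ E] {a : Finset (Fin n)}
  {i : Fin n} {x : Fin n → ℝ}

theorem mixedPartial_eq_of_card_eq {k : ℕ} (h : (Fin n → ℝ) → E) (hk : #a = k)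
    (x : Fin n → ℝ) :
    mixedPartial h a x = iteratedFDeriv ℝ k h x fun j => Pi.single (a.orderEmbOfFin hk j) 1 := by
  subst hk
  rfl

theorem mixedPartial_empty (h : (Fin n → ℝ) → E) : mixedPartial h ∅ = h :=
  funext fun _ => iteratedFDeriv_zero_apply _

theorem differentiableAt_mixedPartial {h : (Fin n → ℝ) → E} {m : WithTop ℕ∞}
    (hh : ContDiffAt ℝ m h x) (ha : #a < m) : DifferentiableAt ℝ (mixedPartial h a) x :=
  (hh.differentiableAt_iteratedFDeriv ha).continuousMultilinear_apply_const _

theorem fderiv_mixedPartial_single {h : (Fin n → ℝ) → E} {m : WithTop ℕ∞}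
    (hh : ContDiffAt ℝ m h x) (ha : #a < m) (hi : ∀ j ∈ a, i < j) :
    fderiv ℝ (mixedPartial h a) x (Pi.single i 1) = mixedPartial h (insert i a) x := by
  have hcard : #(insert i a) = #a + 1 := card_insert_of_notMem fun hia => (hi i hia).false
  rw [mixedPartial_eq_of_card_eq h hcard, iteratedFDeriv_succ_apply_left,
    orderEmbOfFin_insert_of_forall_lt hi hcard]
  exact fderiv_continuousMultilinear_apply_const_apply (hh.differentiableAt_iteratedFDeriv ha) _ _

/-- The term `(∏_{c ∈ P} ∂_c h(x)) • g^{(|P|)}(h(x))` contributed by the family of blocks `P` to Faà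
di Bruno's formula for `∂_a (g ∘ h)(x)`. It is defined for every finite family of finite sets,
so that terms belonging to partitions of different sets `a` can be compared. -/
noncomputable def faaDiBrunoTerm (g : ℝ → E) (h : (Fin n → ℝ) → ℝ) (P : Finset (Finset (Fin n)))
    (x : Fin n → ℝ) : E :=
  (∏ c ∈ P, mixedPartial h c x) • iteratedDeriv #P g (h x)

variable {g : ℝ → E} {h : (Fin n → ℝ) → ℝ}

theorem faaDiBrunoTerm_insert {P : Finset (Finset (Fin n))} {c : Finset (Fin n)} (hc : c ∉ P) :
    faaDiBrunoTerm g h (insert c P) x =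
      (mixedPartial h c x * ∏ d ∈ P, mixedPartial h d x) • iteratedDeriv (#P + 1) g (h x) := by
  rw [faaDiBrunoTerm, prod_insert hc, card_insert_of_notMem hc]

theorem hasFDerivAt_faaDiBrunoTerm {P : Finset (Finset (Fin n))} {m : WithTop ℕ∞}
    (hg : ContDiffAt ℝ m g (h x)) (hh : ContDiffAt ℝ m h x) (hP : #P < m)
    (hc : ∀ c ∈ P, #c < m) :
    HasFDerivAt (faaDiBrunoTerm g h P)
      ((∏ c ∈ P, mixedPartial h c x) •
          (fderiv ℝ h x).smulRight (iteratedDeriv (#P + 1) g (h x)) +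
        (∑ c ∈ P, (∏ d ∈ P.erase c, mixedPartial h d x) • fderiv ℝ (mixedPartial h c) x).smulRight
          (iteratedDeriv #P g (h x))) x := by
  have hasFDerivAt_block : ∀ c ∈ P,
      HasFDerivAt (mixedPartial h c) (fderiv ℝ (mixedPartial h c) x) x := fun c hcP =>
    (differentiableAt_mixedPartial hh (hc c hcP)).hasFDerivAt
  have hasFDerivAt_inner : HasFDerivAt h (fderiv ℝ h x) x :=
    (hh.differentiableAt (pos_of_gt hP).ne').hasFDerivAt
  have hasDerivAt_outer :
      HasDerivAt (iteratedDeriv #P g) (iteratedDeriv (#P + 1) g (h x)) (h x) := by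
    rw [iteratedDeriv_succ]
    exact (differentiableAt_iteratedDeriv hg hP).hasDerivAt
  convert! (HasFDerivAt.finsetProd hasFDerivAt_block).smul
    (hasDerivAt_outer.hasFDerivAt.comp x hasFDerivAt_inner) using 3

theorem fderiv_faaDiBrunoTerm_single {P : Finset (Finset (Fin n))} {m : WithTop ℕ∞}
    (hg : ContDiffAt ℝ m g (h x)) (hh : ContDiffAt ℝ m h x) (hP : #P < m)
    (hc : ∀ c ∈ P, #c < m) (hempty : ∅ ∉ P) (hi : ∀ c ∈ P, ∀ j ∈ c, i < j) :
    fderiv ℝ (faaDiBrunoTerm g h P) x (Pi.single i 1) =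
      ∑ c ∈ insert ∅ P, faaDiBrunoTerm g h (insert (insert i c) (P.erase c)) x := by
  have insert_notMem : ∀ c, insert i c ∉ P := fun c hcP =>
    (hi _ hcP i (mem_insert_self i c)).false
  have fderiv_inner : fderiv ℝ h x (Pi.single i 1) = mixedPartial h (insert i ∅) x := by
    rw [← fderiv_mixedPartial_single hh (by simpa using pos_of_gt hP) (by simp), mixedPartial_empty]
  have chain_term : (∏ c ∈ P, mixedPartial h c x) •
      fderiv ℝ h x (Pi.single i 1) • iteratedDeriv (#P + 1) g (h x) =
        faaDiBrunoTerm g h (insert (insert i ∅) (P.erase ∅)) x := by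
    rw [erase_eq_of_notMem hempty, faaDiBrunoTerm_insert (insert_notMem ∅), fderiv_inner,
      smul_smul, mul_comm]
  have product_term : ∀ c ∈ P, ((∏ d ∈ P.erase c, mixedPartial h d x) *
      fderiv ℝ (mixedPartial h c) x (Pi.single i 1)) • iteratedDeriv #P g (h x) =
        faaDiBrunoTerm g h (insert (insert i c) (P.erase c)) x := fun c hcP => by
    rw [faaDiBrunoTerm_insert fun hmem => insert_notMem c (mem_of_mem_erase hmem),
      fderiv_mixedPartial_single hh (hc c hcP) (hi c hcP), card_erase_add_one hcP, mul_comm]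
  rw [(hasFDerivAt_faaDiBrunoTerm hg hh hP hc).fderiv, sum_insert hempty, ← chain_term,
    ← sum_congr rfl product_term, ← sum_smul]
  simp

theorem mixedPartial_comp_eq_sum_finpartition (hg : ContDiffAt ℝ #a g (h x))
    (hh : ContDiffAt ℝ #a h x) :
    mixedPartial (g ∘ h) a x = ∑ p : Finpartition a, faaDiBrunoTerm g h p.parts x := by
  induction a using Finset.induction_on_min generalizing x with
  | empty =>
    rw [mixedPartial_empty, sum_finpartition_empty (faaDiBrunoTerm g h · x)]
    simp [faaDiBrunoTerm]
  | insert i a hi ih =>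
    have hia : i ∉ a := fun hia => (hi i hia).false
    have hlt : (#a : WithTop ℕ∞) < #(insert i a) := by
      exact_mod_cast card_lt_card (ssubset_insert hia)
    have formula_near : mixedPartial (g ∘ h) a =ᶠ[nhds x]
        fun y => ∑ p : Finpartition a, faaDiBrunoTerm g h p.parts y := by
      have hg_near := hh.continuousAt.eventually (hg.eventually (by simp))
      filter_upwards [hg_near, hh.eventually (by simp)] with y hgy hhy
      exact ih (hgy.of_le hlt.le) (hhy.of_le hlt.le)
    have card_parts_lt (p : Finpartition a) : (#p.parts : WithTop ℕ∞) < #(insert i a) :=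
      lt_of_le_of_lt (by exact_mod_cast p.card_parts_le_card) hlt
    have card_block_lt (p : Finpartition a) :
        ∀ c ∈ p.parts, (#c : WithTop ℕ∞) < #(insert i a) := fun c hc =>
      lt_of_le_of_lt (by exact_mod_cast card_le_card (p.subset hc)) hlt
    rw [← fderiv_mixedPartial_single (hg.comp x hh) hlt hi, formula_near.fderiv_eq,
      fderiv_fun_sum fun p _ =>
        (hasFDerivAt_faaDiBrunoTerm hg hh (card_parts_lt p) (card_block_lt p)).differentiableAt,
      sum_finpartition_insert hia (faaDiBrunoTerm g h · x), _root_.sum_apply]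
    exact sum_congr rfl fun p _ =>
      fderiv_faaDiBrunoTerm_single hg hh (card_parts_lt p) (card_block_lt p)
        p.empty_notMem_parts fun c hc j hj => hi j (p.subset hc hj)

theorem mixedPartial_log_comp_general (hh : ContDiffAt ℝ #a h x) (hx : 0 < h x)
    (ha : a.Nonempty) :
    mixedPartial (fun y => Real.log (h y)) a x =
      ∑ p : Finpartition a, ((#p.parts - 1).factorial : ℝ) * (-1) ^ (#p.parts - 1) *
        (∏ c ∈ p.parts, mixedPartial h c x) / h x ^ #p.parts := by
  refine (mixedPartial_comp_eq_sum_finpartition (Real.contDiffAt_log.2 hx.ne') hh).trans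
    (sum_congr rfl fun p _ => ?_)
  obtain ⟨k, hk⟩ := Nat.exists_eq_add_one.2 (card_pos.2 (p.parts_nonempty ha.ne_empty))
  rw [faaDiBrunoTerm, hk, iteratedDeriv_succ_real_log, show (-1 - k : ℤ) = -(k + 1 : ℕ) by lia,
    zpow_neg, zpow_natCast, Nat.add_sub_cancel, smul_eq_mul]
  ring

end MixedPartial

/-- Faà di Bruno for the logarithm: if `h : ℝⁿ → ℝ` is smooth with `h(0) > 0`,
then for every nonempty `a ⊆ {1,…,n}`,
`∂_a(log ∘ h)(0) = ∑_p (|p|−1)!·(−1)^{|p|−1}·(∏_{c∈p} ∂_c h(0))/h(0)^{|p|}`,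
summed over all set partitions `p` of `a`. -/
theorem mixedPartial_log_comp (n : ℕ) (h : (Fin n → ℝ) → ℝ)
    (hh : ContDiff ℝ (⊤ : ℕ∞) h) (h0 : 0 < h 0)
    (a : Finset (Fin n)) (ha : a.Nonempty) :
    mixedPartial (fun x => Real.log (h x)) a 0 =
      ∑ p : Finpartition a,
        (Nat.factorial (p.parts.card - 1) : ℝ) * (-1 : ℝ) ^ (p.parts.card - 1) *
          (∏ c ∈ p.parts, mixedPartial h c 0) / (h 0) ^ p.parts.card := by
  exact mixedPartial_log_comp_general (hh.contDiffAt.of_le (by exact_mod_cast le_top)) h0 ha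
end
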